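/- Let S ⊆ ℝ be a Lebesgue measurable set. Fix an integer ℓ ≥ 0, a positive integer h, and integers M, N with 2^ℓ ≤ M < N and N ≥ 2^{ℓ+1}. Then there is a measurable exceptional set of pairs (θ, η), of 2-dimensional Lebesgue measure at most 2^{ℓ+13}/(h·log²(1+h)), such that every pair (θ, η) with 2^ℓ ≤ θ ≤ 2^{ℓ+1} and 0 ≤ η < θ outside this exceptional set satisfies |#{k ∈ ℕ : kθ + η ∈ S ∩ [0, N]} − (1/θ)·λ₁(S ∩ [0, N])| < 2N/M + (hNM)^{1/2} log(1+h) + 2. -/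

import Mathlib

open MeasureTheory

/-!
For fixed `θ`, the function `η ↦ ∑ₖ f (kθ + η)` on a period has Fourier coefficients
`θ⁻¹ 𝓕 f (m / θ)`, and its zeroth coefficient is the expected value `(∫ f) / θ`. By Parseval, the
mean square of the discrepancy over the offsets `η` is `θ⁻¹ ∑_{m ≠ 0} |𝓕 f (m / θ)|²`. Integrating
over `0 < θ ≤ b` and substituting `u = m / θ`, for which `dθ / θ = du / |u|`, each frequency `u` is
hit by at most `b |u|` integers `m`; hence by Plancherel the total is at most
`b ∫ |𝓕 f|² = b ∫ |f|²`. For the indicator function of `S ∩ [0, N]` this is at most `b N`, and the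
theorem is Chebyshev's inequality.
-/

section

open Set Filter Function
open scoped FourierTransform SchwartzMap ENNReal

section Plancherel

variable {V F : Type*} [NormedAddCommGroup V] [InnerProductSpace ℝ V] [FiniteDimensional ℝ V]
  [MeasurableSpace V] [BorelSpace V] [NormedAddCommGroup F]

section NormedSpace

variable [NormedSpace ℂ F] {f : V → F}

theorem continuous_fourier_of_integrable (hf : Integrable f) : Continuous (𝓕 f) :=
  VectorFourier.fourierIntegral_continuous Real.continuous_fourierChar
    (innerSL ℝ).continuous₂ hf

theorem integral_fourier_smul_eq_integral_smul_fourier [CompleteSpace F] {u : V → ℂ}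
    (hu : Integrable u) (hf : Integrable f) : ∫ ξ, 𝓕 u ξ • f ξ = ∫ x, u x • 𝓕 f x := by
  simpa using! VectorFourier.integral_fourierIntegral_smul_eq_flip (L := innerₗ V)
    Real.continuous_fourierChar continuous_inner hu hf

end NormedSpace

variable [InnerProductSpace ℂ F] [CompleteSpace F] {f : V → F}

theorem fourier_toLp_two_ae_eq (hf : Integrable f) (hf2 : MemLp f 2) :
    (𝓕 (hf2.toLp f) : Lp F 2 volume) =ᵐ[volume] 𝓕 f := by
  refine ae_eq_of_integral_contDiff_smul_eq
    ((Lp.memLp (𝓕 (hf2.toLp f) : Lp F 2 volume)).locallyIntegrable one_le_two)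
    (continuous_fourier_of_integrable hf).locallyIntegrable fun g hg hgc ↦ ?_
  let φ : 𝓢(V, ℂ) := (hgc.comp_left Complex.ofReal_zero).toSchwartzMap
    (Complex.ofRealCLM.contDiff.comp hg)
  have hφ (x : V) (y : F) : g x • y = φ x • y := (Complex.coe_smul (g x) y).symm
  simp_rw [hφ]
  calc ∫ x, φ x • (𝓕 (hf2.toLp f) : Lp F 2 volume) x
      = (Lp.toTemperedDistribution (𝓕 (hf2.toLp f) : Lp F 2 volume)) φ := by simp
    _ = ∫ x, (𝓕 φ) x • hf2.toLp f x := by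
      rw [← Lp.fourier_toTemperedDistribution_eq]; simp
    _ = ∫ x, 𝓕 φ x • f x :=
      integral_congr_ae (hf2.coeFn_toLp.mono fun x hx ↦ by simp only [hx])
    _ = ∫ x, φ x • 𝓕 f x := by
      rw [SchwartzMap.fourier_coe, integral_fourier_smul_eq_integral_smul_fourier φ.integrable hf]

theorem lintegral_enorm_fourier_sq (hf : Integrable f) (hf2 : MemLp f 2) :
    ∫⁻ ξ, ‖𝓕 f ξ‖ₑ ^ 2 = ∫⁻ x, ‖f x‖ₑ ^ 2 := by
  have h (g : V → F) : eLpNorm g 2 volume ^ 2 = ∫⁻ x, ‖g x‖ₑ ^ 2 := by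
    simpa using (eLpNorm_nnreal_pow_eq_lintegral (p := 2) (f := g) (μ := volume) two_ne_zero)
  rw [← h, ← h, ← eLpNorm_congr_ae (fourier_toLp_two_ae_eq hf hf2), ← Lp.enorm_toLp hf2,
    ← Lp.enorm_def, enorm_eq_iff_norm_eq.mpr (Lp.norm_fourier_eq _)]

end Plancherel

section FourierSeries

variable {a b : ℝ} {E : Type*} [NormedAddCommGroup E] [NormedSpace ℂ E]

theorem fourierCoeffOn_const [CompleteSpace E] (hab : a < b) (c : E) (n : ℤ) :
    fourierCoeffOn hab (fun _ ↦ c) n = if n = 0 then c else 0 := by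
  have : Fact (0 < b - a) := ⟨sub_pos.mpr hab⟩
  have h := congr_fun (fourierCoeff_fourier (T := b - a) 0) n
  simp only [fourierCoeff, smul_eq_mul, fourier_zero, mul_one] at h
  change ∫ t, fourier (-n) t • c ∂AddCircle.haarAddCircle = _
  rw [integral_smul_const, h, Pi.single_apply, ite_smul, one_smul, zero_smul]

theorem fourierCoeffOn_sub {f g : ℝ → E} (hab : a < b) (hf : IntervalIntegrable f volume a b)
    (hg : IntervalIntegrable g volume a b) (n : ℤ) :
    fourierCoeffOn hab (fun x ↦ f x - g x) n = fourierCoeffOn hab f n - fourierCoeffOn hab g n := by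
  have hcont : Continuous fun x : ℝ ↦ fourier (T := b - a) (-n) x :=
    (fourier (-n)).continuous.comp (AddCircle.continuous_mk' _)
  simp only [fourierCoeffOn_eq_integral, smul_sub]
  rw [intervalIntegral.integral_sub (hf.continuousOn_smul hcont.continuousOn)
    (hg.continuousOn_smul hcont.continuousOn), smul_sub]

theorem lintegral_enorm_sq_eq_tsum_enorm_fourierCoeffOn_sq {f : ℝ → ℂ} (hab : a < b)
    (hf : MemLp f 2 (volume.restrict (Ioc a b))) :
    ∫⁻ x in Ioc a b, ‖f x‖ₑ ^ 2 =
      ENNReal.ofReal (b - a) * ∑' n : ℤ, ‖fourierCoeffOn hab f n‖ₑ ^ 2 := by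
  have hsum := hasSum_sq_fourierCoeffOn hab hf
  have hab' : 0 < b - a := sub_pos.mpr hab
  have h (z : ℂ) : ‖z‖ₑ ^ 2 = ENNReal.ofReal (‖z‖ ^ 2) := by
    rw [ENNReal.ofReal_pow (norm_nonneg z), ofReal_norm]
  simp only [h]
  rw [← ENNReal.ofReal_tsum_of_nonneg (fun n ↦ sq_nonneg _) hsum.summable, hsum.tsum_eq,
    ← ENNReal.ofReal_mul hab'.le, smul_eq_mul, mul_inv_cancel_left₀ hab'.ne',
    intervalIntegral.integral_of_le hab.le,
    ofReal_integral_eq_lintegral_ofReal hf.integrable_norm_pow' (ae_of_all _ fun x ↦ sq_nonneg _)]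

theorem lintegral_enorm_sub_fourierCoeffOn_zero_sq {f : ℝ → ℂ} (hab : a < b)
    (hf : MemLp f 2 (volume.restrict (Ioc a b))) :
    ∫⁻ x in Ioc a b, ‖f x - fourierCoeffOn hab f 0‖ₑ ^ 2 =
      ENNReal.ofReal (b - a) * ∑' n : {n : ℤ // n ≠ 0}, ‖fourierCoeffOn hab f n‖ₑ ^ 2 := by
  have hint : IntervalIntegrable f volume a b := by
    rw [intervalIntegrable_iff_integrableOn_Ioc_of_le hab.le]
    exact hf.integrable one_le_two
  rw [lintegral_enorm_sq_eq_tsum_enorm_fourierCoeffOn_sq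
      (f := fun x ↦ f x - fourierCoeffOn hab f 0) hab (hf.sub (memLp_const _))]
  congr 1
  refine Eq.trans (tsum_congr fun n ↦ ?_)
    (tsum_subtype {n : ℤ | n ≠ 0} fun n ↦ ‖fourierCoeffOn hab f n‖ₑ ^ 2).symm
  rw [fourierCoeffOn_sub hab hint intervalIntegrable_const, fourierCoeffOn_const]
  obtain rfl | hn := eq_or_ne n 0 <;> simp [*]

theorem fourier_neg_coe_eq_exp_natCast_mul_add {θ : ℝ} (hθ : θ ≠ 0) (m : ℤ) (k : ℕ) (x : ℝ) :
    fourier (-m) (x : AddCircle θ) =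
      Complex.exp (↑(-2 * Real.pi * ((k * θ + x) * (m / θ))) * Complex.I) := by
  have hθ' : (θ : ℂ) ≠ 0 := mod_cast hθ
  rw [fourier_coe_apply, Complex.exp_eq_exp_iff_exists_int]
  refine ⟨m * k, ?_⟩
  push_cast
  field_simp
  ring

theorem fourierCoeffOn_sum_range_comp_mul_add {f : ℝ → E} (hf : Integrable f) {θ : ℝ} (hθ : 0 < θ)
    {K : ℕ} (hsupp : support f ⊆ Icc 0 (K * θ)) (m : ℤ) :
    fourierCoeffOn hθ (fun η ↦ ∑ k ∈ Finset.range K, f (k * θ + η)) m =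
      (θ⁻¹ : ℂ) • 𝓕 f (m / θ) := by
  let e (x : ℝ) : ℂ := Complex.exp (↑(-2 * Real.pi * (x * (m / θ))) * Complex.I)
  have he (k : ℕ) (x : ℝ) : fourier (-m) (x : AddCircle (θ - 0)) = e (k * θ + x) := by
    rw [sub_zero]
    exact fourier_neg_coe_eq_exp_natCast_mul_add hθ.ne' m k x
  have hint (a b : ℝ) : IntervalIntegrable (fun x ↦ e x • f x) volume a b :=
    hf.intervalIntegrable.continuousOn_smul (by fun_prop)
  have hshift (k : ℕ) : ∫ x in 0..θ, e (k * θ + x) • f (k * θ + x) =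
      ∫ x in ↑k * θ..↑(k + 1) * θ, e x • f x := by
    rw [intervalIntegral.integral_comp_add_left (fun x ↦ e x • f x) (k * θ), add_zero]
    push_cast
    ring_nf
  calc fourierCoeffOn hθ (fun η ↦ ∑ k ∈ Finset.range K, f (k * θ + η)) m
      = (θ⁻¹ : ℂ) • ∫ x in 0..θ, ∑ k ∈ Finset.range K, e (k * θ + x) • f (k * θ + x) := by
        rw [fourierCoeffOn_eq_integral]
        simp only [Finset.smul_sum, ← he, sub_zero, one_div]
        norm_cast
    _ = (θ⁻¹ : ℂ) • ∫ x in 0..K * θ, e x • f x := by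
        rw [intervalIntegral.integral_finsetSum]
        · simp only [hshift]
          rw [intervalIntegral.sum_integral_adjacent_intervals fun k _ ↦ hint _ _]
          simp
        · exact fun k _ ↦ by
            simpa using (hint (k * θ) (k * θ + θ)).comp_add_left (k * θ) enorm_ne_top
    _ = (θ⁻¹ : ℂ) • 𝓕 f (m / θ) := by
        rw [Real.fourier_eq', intervalIntegral.integral_of_le (by positivity),
          ← integral_Icc_eq_integral_Ioc, setIntegral_eq_integral_of_forall_compl_eq_zero]
        · simp [e, mul_comm]
        · intro x hx
          rw [notMem_support.mp fun h ↦ hx (hsupp h), smul_zero]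

end FourierSeries

section LatticeMean

variable {H : ℝ → ℝ≥0∞}

-- The measure `dx / |x|` is invariant under `x ↦ c / x`.
theorem setLIntegral_enorm_inv_mul_comp_const_div {c : ℝ} (hc : c ≠ 0) {s : Set ℝ}
    (hs : MeasurableSet s) (hs0 : 0 ∉ s) :
    ∫⁻ x in s, ‖x⁻¹‖ₑ * H (c / x) = ∫⁻ u in (c / ·) ⁻¹' s, ‖u⁻¹‖ₑ * H u := by
  have hne {x : ℝ} (hx : x ∈ s) : x ≠ 0 := ne_of_mem_of_not_mem hx hs0
  have hinv : Involutive (c / · : ℝ → ℝ) := fun _ ↦ div_div_cancel₀ hc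
  have hderiv (x : ℝ) (hx : x ∈ s) : HasDerivWithinAt (c / ·) (-c / x ^ 2) s x := by
    simpa [div_eq_mul_inv] using ((hasDerivAt_inv (hne hx)).const_mul c).hasDerivWithinAt
  rw [← image_eq_preimage_of_inverse hinv.leftInverse hinv.rightInverse,
    lintegral_image_eq_lintegral_abs_deriv_mul hs hderiv hinv.injective.injOn]
  refine setLIntegral_congr_fun hs fun x hx ↦ ?_
  have hx := hne hx
  simp only [← mul_assoc]
  rw [← Real.enorm_eq_ofReal_abs, ← enorm_mul, ← enorm_neg]
  congr 2
  field_simp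

theorem encard_setOf_int_div_mem_Ioc_le (b u : ℝ) :
    {m : ℤ | (m : ℝ) / u ∈ Ioc 0 b}.encard ≤ ⌊b * |u|⌋₊ := by
  have habs {m : ℤ} (hm : (m : ℝ) / u ∈ Ioc 0 b) : (m : ℝ) / u = m.natAbs / |u| := by
    rw [← abs_of_pos hm.1, abs_div, Nat.cast_natAbs, Int.cast_abs]
  have hmaps : MapsTo Int.natAbs {m : ℤ | (m : ℝ) / u ∈ Ioc 0 b} (Finset.Icc 1 ⌊b * |u|⌋₊) := by
    intro m hm
    have hm0 : m ≠ 0 := fun hm0 ↦ hm.1.ne' (by simp [hm0])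
    have hu : 0 < |u| := abs_pos.mpr fun hu ↦ hm.1.ne' (by simp [hu])
    have hle : (m.natAbs : ℝ) ≤ b * |u| := (div_le_iff₀ hu).mp (habs hm ▸ hm.2)
    exact Finset.mem_coe.mpr (Finset.mem_Icc.mpr ⟨Int.natAbs_pos.mpr hm0, Nat.le_floor hle⟩)
  have hinj : InjOn Int.natAbs {m : ℤ | (m : ℝ) / u ∈ Ioc 0 b} := by
    intro m hm n hn h
    have hu : u ≠ 0 := fun hu ↦ hm.1.ne' (by simp [hu])
    have hmn : (m : ℝ) / u = n / u := by rw [habs hm, habs hn, h]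
    exact mod_cast (div_left_inj' hu).mp hmn
  have h := encard_le_encard_of_injOn hmaps hinj
  rwa [encard_coe_eq_coe_finsetCard, Nat.card_Icc, Nat.add_sub_cancel] at h

theorem tsum_indicator_int_div_preimage_Ioc_le (b u : ℝ) :
    ∑' m : ℤ, ((m / · : ℝ → ℝ) ⁻¹' Ioc 0 b).indicator 1 u ≤ ENNReal.ofReal b * ‖u‖ₑ := by
  calc ∑' m : ℤ, ((m / · : ℝ → ℝ) ⁻¹' Ioc 0 b).indicator 1 u
      = ∑' m, {m : ℤ | (m : ℝ) / u ∈ Ioc 0 b}.indicator (fun _ ↦ (1 : ℝ≥0∞)) m := rfl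
    _ = {m : ℤ | (m : ℝ) / u ∈ Ioc 0 b}.encard := by rw [← tsum_subtype, ENNReal.tsum_set_one]
    _ ≤ ENNReal.ofReal ⌊b * |u|⌋₊ := by
      rw [ENNReal.ofReal_natCast]
      exact mod_cast encard_setOf_int_div_mem_Ioc_le b u
    _ ≤ ENNReal.ofReal (b * |u|) := by
      obtain hb | hb := le_total 0 (b * |u|)
      · exact ENNReal.ofReal_le_ofReal (Nat.floor_le hb)
      · simp [Nat.floor_of_nonpos hb]
    _ = ENNReal.ofReal b * ‖u‖ₑ := by
      rw [Real.enorm_eq_ofReal_abs, ENNReal.ofReal_mul' (abs_nonneg u)]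

theorem setLIntegral_tsum_enorm_inv_mul_int_div_le (hH : Measurable H) (b : ℝ) :
    ∫⁻ x in Ioc 0 b, ∑' m : {m : ℤ // m ≠ 0}, ‖x⁻¹‖ₑ * H (m / x) ≤
      ENNReal.ofReal b * ∫⁻ u, H u := by
  let s (m : {m : ℤ // m ≠ 0}) : Set ℝ := (m / · : ℝ → ℝ) ⁻¹' Ioc 0 b
  have hs (m) : MeasurableSet (s m) := (measurable_const.div measurable_id) measurableSet_Ioc
  calc ∫⁻ x in Ioc 0 b, ∑' m : {m : ℤ // m ≠ 0}, ‖x⁻¹‖ₑ * H (m / x)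
      = ∑' m : {m : ℤ // m ≠ 0}, ∫⁻ x in Ioc 0 b, ‖x⁻¹‖ₑ * H (m / x) :=
        lintegral_tsum fun m ↦ by fun_prop
    _ = ∑' m : {m : ℤ // m ≠ 0}, ∫⁻ u in s m, ‖u⁻¹‖ₑ * H u :=
        tsum_congr fun m ↦ setLIntegral_enorm_inv_mul_comp_const_div (mod_cast m.2)
          measurableSet_Ioc (by simp)
    _ = ∑' m, ∫⁻ u, (s m).indicator 1 u * (‖u⁻¹‖ₑ * H u) :=
        tsum_congr fun m ↦ by
          classical
          simp only [← lintegral_indicator (hs m), indicator_apply, Pi.one_apply, boole_mul]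
    _ = ∫⁻ u, (∑' m, (s m).indicator 1 u) * (‖u⁻¹‖ₑ * H u) := by
        simp only [← ENNReal.tsum_mul_right]
        exact (lintegral_tsum fun m ↦
          ((measurable_one.indicator (hs m)).mul (by fun_prop)).aemeasurable).symm
    _ ≤ ∫⁻ u, ENNReal.ofReal b * H u := by
        refine lintegral_mono fun u ↦ ?_
        calc (∑' m, (s m).indicator 1 u) * (‖u⁻¹‖ₑ * H u)
            ≤ ENNReal.ofReal b * ‖u‖ₑ * (‖u⁻¹‖ₑ * H u) := by
              gcongr
              exact (ENNReal.tsum_comp_le_tsum_of_injective Subtype.val_injective _).trans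
                (tsum_indicator_int_div_preimage_Ioc_le b u)
          _ = ENNReal.ofReal b * (‖u * u⁻¹‖ₑ * H u) := by rw [enorm_mul]; ring
          _ ≤ ENNReal.ofReal b * H u := by
              gcongr
              refine mul_le_of_le_one_left' ?_
              obtain rfl | hu := eq_or_ne u 0 <;> simp [*]
    _ = ENNReal.ofReal b * ∫⁻ u, H u := lintegral_const_mul _ hH

end LatticeMean

section Discrepancy

/-- The discrepancy of the progression `η, η + θ, η + 2θ, …` for the weight `f`: the sum of `f`
over the progression minus its expected value `(∫ f) / θ`. The sum is only meaningful where it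
converges, e.g. for `f` of bounded support. -/
noncomputable def progressionDiscrepancy (f : ℝ → ℂ) (θ η : ℝ) : ℂ :=
  ∑' k : ℕ, f (k * θ + η) - (∫ x, f x) / θ

variable {f : ℝ → ℂ} {X θ : ℝ}

theorem tsum_comp_mul_add_eq_sum_range {E : Type*} [AddCommMonoid E] [TopologicalSpace E]
    {f : ℝ → E} {η : ℝ} {K : ℕ} (hsupp : support f ⊆ Icc 0 X) (hθ : 0 ≤ θ) (hη : 0 ≤ η)
    (hK : X < K * θ) : ∑' k : ℕ, f (k * θ + η) = ∑ k ∈ Finset.range K, f (k * θ + η) := by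
  refine tsum_eq_sum fun k hk ↦ notMem_support.mp fun h ↦ (hsupp h).2.not_gt ?_
  have hKk : (K : ℝ) ≤ k := mod_cast not_lt.mp (Finset.mem_range.not.mp hk)
  nlinarith

theorem integrable_of_memLp_two_of_support_subset_Icc (hf : MemLp f 2)
    (hsupp : support f ⊆ Icc 0 X) : Integrable f :=
  (integrableOn_iff_integrable_of_support_subset hsupp).mp ((hf.restrict _).integrable one_le_two)

theorem lintegral_enorm_progressionDiscrepancy_sq (hf : MemLp f 2)
    (hsupp : support f ⊆ Icc 0 X) (hθ : 0 < θ) :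
    ∫⁻ η in Ico 0 θ, ‖progressionDiscrepancy f θ η‖ₑ ^ 2 =
      ∑' m : {m : ℤ // m ≠ 0}, ‖θ⁻¹‖ₑ * ‖𝓕 f (m / θ)‖ₑ ^ 2 := by
  obtain ⟨K, hK⟩ : ∃ K : ℕ, X < K * θ :=
    (exists_nat_gt (X / θ)).imp fun K ↦ (div_lt_iff₀ hθ).mp
  set g : ℝ → ℂ := fun η ↦ ∑ k ∈ Finset.range K, f (k * θ + η) with hg
  have hcoeff (m : ℤ) : fourierCoeffOn hθ g m = (θ⁻¹ : ℂ) * 𝓕 f (m / θ) :=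
    fourierCoeffOn_sum_range_comp_mul_add
      (integrable_of_memLp_two_of_support_subset_Icc hf hsupp) hθ
      (hsupp.trans (Icc_subset_Icc_right hK.le)) m
  have hdiscr {η : ℝ} (hη : η ∈ Ico 0 θ) :
      progressionDiscrepancy f θ η = g η - fourierCoeffOn hθ g 0 := by
    rw [progressionDiscrepancy, tsum_comp_mul_add_eq_sum_range hsupp hθ.le hη.1 hK, hcoeff,
      Real.fourier_eq']
    simp [hg, div_eq_inv_mul]
  have hgL2 : MemLp g 2 (volume.restrict (Ioc 0 θ)) :=
    (memLp_finsetSum (f := fun (k : ℕ) η ↦ f (k * θ + η)) _ fun k _ ↦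
      hf.comp_measurePreserving (measurePreserving_add_left volume (k * θ))).restrict _
  calc ∫⁻ η in Ico 0 θ, ‖progressionDiscrepancy f θ η‖ₑ ^ 2
      = ∫⁻ η in Ico 0 θ, ‖g η - fourierCoeffOn hθ g 0‖ₑ ^ 2 :=
        setLIntegral_congr_fun measurableSet_Ico fun η hη ↦ by simp only [hdiscr hη]
    _ = ∫⁻ η in Ioc 0 θ, ‖g η - fourierCoeffOn hθ g 0‖ₑ ^ 2 := by
        rw [restrict_Ico_eq_restrict_Ioc]
    _ = ∑' m : {m : ℤ // m ≠ 0}, ‖θ⁻¹‖ₑ * ‖𝓕 f (m / θ)‖ₑ ^ 2 := by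
        rw [lintegral_enorm_sub_fourierCoeffOn_zero_sq hθ hgL2, ← ENNReal.tsum_mul_left]
        have hθθ : ENNReal.ofReal (θ - 0) * ‖θ⁻¹‖ₑ ^ 2 = ‖θ⁻¹‖ₑ := by
          rw [sub_zero, ← Real.enorm_of_nonneg hθ.le, ← enorm_pow, ← enorm_mul]
          congr 1
          field_simp
        refine tsum_congr fun m ↦ ?_
        rw [hcoeff, enorm_mul, mul_pow, ← mul_assoc, ← hθθ]
        congr 3
        simp [← ofReal_norm]

theorem lintegral_lintegral_enorm_progressionDiscrepancy_sq_le (hf : MemLp f 2)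
    (hsupp : support f ⊆ Icc 0 X) (b : ℝ) :
    ∫⁻ θ in Ioc 0 b, ∫⁻ η in Ico 0 θ, ‖progressionDiscrepancy f θ η‖ₑ ^ 2 ≤
      ENNReal.ofReal b * ∫⁻ x, ‖f x‖ₑ ^ 2 := by
  have hint := integrable_of_memLp_two_of_support_subset_Icc hf hsupp
  have hcont := continuous_fourier_of_integrable hint
  calc ∫⁻ θ in Ioc 0 b, ∫⁻ η in Ico 0 θ, ‖progressionDiscrepancy f θ η‖ₑ ^ 2
      = ∫⁻ θ in Ioc 0 b, ∑' m : {m : ℤ // m ≠ 0}, ‖θ⁻¹‖ₑ * ‖𝓕 f (m / θ)‖ₑ ^ 2 :=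
        setLIntegral_congr_fun measurableSet_Ioc fun θ hθ ↦
          lintegral_enorm_progressionDiscrepancy_sq hf hsupp hθ.1
    _ ≤ ENNReal.ofReal b * ∫⁻ ξ, ‖𝓕 f ξ‖ₑ ^ 2 :=
        setLIntegral_tsum_enorm_inv_mul_int_div_le (H := fun ξ ↦ ‖𝓕 f ξ‖ₑ ^ 2)
          (by fun_prop) b
    _ = ENNReal.ofReal b * ∫⁻ x, ‖f x‖ₑ ^ 2 := by rw [lintegral_enorm_fourier_sq hint hf]

/-- The parameters `(θ, η)` of the progressions `η, η + θ, η + 2θ, …` of step at most `b`, with the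
offset `η` taken in the fundamental domain `[0, θ)`. -/
def stepOffsetRegion (b : ℝ) : Set (ℝ × ℝ) :=
  {p | p.1 ∈ Ioc 0 b ∧ p.2 ∈ Ico 0 p.1}

theorem measurableSet_stepOffsetRegion (b : ℝ) : MeasurableSet (stepOffsetRegion b) := by
  unfold stepOffsetRegion
  simp only [mem_Ioc, mem_Ico]
  measurability

theorem setLIntegral_stepOffsetRegion {b : ℝ} {G : ℝ × ℝ → ℝ≥0∞}
    (hG : AEMeasurable G (volume.restrict (stepOffsetRegion b))) :
    ∫⁻ p in stepOffsetRegion b, G p = ∫⁻ θ in Ioc 0 b, ∫⁻ η in Ico 0 θ, G (θ, η) := by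
  have hR := measurableSet_stepOffsetRegion b
  rw [← lintegral_indicator hR, Measure.volume_eq_prod,
    lintegral_prod _ ((aemeasurable_indicator_iff hR).mpr hG),
    ← lintegral_indicator measurableSet_Ioc]
  refine lintegral_congr fun θ ↦ ?_
  by_cases hθ : θ ∈ Ioc 0 b
  · rw [indicator_of_mem hθ, ← lintegral_indicator measurableSet_Ico]
    refine lintegral_congr fun η ↦ ?_
    by_cases hη : η ∈ Ico 0 θ
    · rw [indicator_of_mem hη, indicator_of_mem (show (θ, η) ∈ stepOffsetRegion b from ⟨hθ, hη⟩)]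
    · rw [indicator_of_notMem hη, indicator_of_notMem fun h ↦ hη h.2]
  · rw [indicator_of_notMem hθ]
    exact (lintegral_congr fun η ↦ indicator_of_notMem (fun h ↦ hθ h.1) _).trans lintegral_zero

theorem aemeasurable_progressionDiscrepancy (hf : Measurable f) (hsupp : support f ⊆ Icc 0 X)
    (b : ℝ) : AEMeasurable (fun p : ℝ × ℝ ↦ progressionDiscrepancy f p.1 p.2)
      (volume.restrict (stepOffsetRegion b)) := by
  refine AEMeasurable.sub ?_ (by fun_prop)
  refine aemeasurable_of_tendsto_metrizable_ae atTop
    (f := fun K p ↦ ∑ k ∈ Finset.range K, f (k * p.1 + p.2)) (fun K ↦ by fun_prop) ?_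
  filter_upwards [ae_restrict_mem (measurableSet_stepOffsetRegion b)] with p hp
  refine tendsto_const_nhds.congr' ?_
  filter_upwards [tendsto_natCast_atTop_atTop.eventually_gt_atTop (X / p.1)] with K hK
  exact tsum_comp_mul_add_eq_sum_range hsupp hp.1.1.le hp.2.1 ((div_lt_iff₀ hp.1.1).mp hK)

theorem sq_mul_volume_le_enorm_progressionDiscrepancy_le (hf : Measurable f) (hf2 : MemLp f 2)
    (hsupp : support f ⊆ Icc 0 X) (b : ℝ) (t : ℝ≥0∞) :
    t ^ 2 * volume {p ∈ stepOffsetRegion b | t ≤ ‖progressionDiscrepancy f p.1 p.2‖ₑ} ≤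
      ENNReal.ofReal b * ∫⁻ x, ‖f x‖ₑ ^ 2 := by
  have hD := (aemeasurable_progressionDiscrepancy hf hsupp b).enorm.pow_const 2
  calc t ^ 2 * volume {p ∈ stepOffsetRegion b | t ≤ ‖progressionDiscrepancy f p.1 p.2‖ₑ}
      = t ^ 2 * volume.restrict (stepOffsetRegion b)
          {p | t ^ 2 ≤ ‖progressionDiscrepancy f p.1 p.2‖ₑ ^ 2} := by
        simp only [Measure.restrict_apply' (measurableSet_stepOffsetRegion b), inter_comm,
          ENNReal.pow_le_pow_left_iff two_ne_zero]
        rfl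
    _ ≤ ∫⁻ p in stepOffsetRegion b, ‖progressionDiscrepancy f p.1 p.2‖ₑ ^ 2 :=
        mul_meas_ge_le_lintegral₀ hD _
    _ = ∫⁻ θ in Ioc 0 b, ∫⁻ η in Ico 0 θ, ‖progressionDiscrepancy f θ η‖ₑ ^ 2 :=
        setLIntegral_stepOffsetRegion hD
    _ ≤ ENNReal.ofReal b * ∫⁻ x, ‖f x‖ₑ ^ 2 :=
        lintegral_lintegral_enorm_progressionDiscrepancy_sq_le hf2 hsupp b

theorem progressionDiscrepancy_indicator_one {E : Set ℝ} (hE : MeasurableSet E) (θ η : ℝ) :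
    progressionDiscrepancy (E.indicator fun _ ↦ 1) θ η =
      (Nat.card {k : ℕ | k * θ + η ∈ E} - 1 / θ * volume.real E : ℝ) := by
  have hcard : ∑' k : ℕ, E.indicator (fun _ ↦ (1 : ℂ)) (k * θ + η) =
      Nat.card {k : ℕ | k * θ + η ∈ E} := by
    rw [← nsmul_one, ← tsum_const, tsum_subtype _ fun _ ↦ 1]
    rfl
  rw [progressionDiscrepancy, hcard, integral_indicator_const _ hE, Complex.real_smul]
  push_cast
  ring

theorem exists_volume_le_forall_abs_card_sub_lt {E : Set ℝ} (hE : MeasurableSet E)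
    (hEX : E ⊆ Icc 0 X) (b : ℝ) {T : ℝ} (hT : 0 < T) :
    ∃ B : Set (ℝ × ℝ), MeasurableSet B ∧ volume B ≤ ENNReal.ofReal (b * (volume.real E / T ^ 2)) ∧
      ∀ θ η : ℝ, 0 < θ → θ ≤ b → 0 ≤ η → η < θ → (θ, η) ∉ B →
        |(Nat.card {k : ℕ | k * θ + η ∈ E} : ℝ) - 1 / θ * volume.real E| < T := by
  let f : ℝ → ℂ := E.indicator fun _ ↦ 1
  have hE_top : volume E ≠ ∞ := measure_ne_top_of_subset hEX (by simp)
  have hf : MemLp f 2 := memLp_indicator_const 2 hE 1 (.inr hE_top)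
  have hf_sq : ∫⁻ x, ‖f x‖ₑ ^ 2 = volume E := by
    rw [← lintegral_indicator_one hE]
    exact lintegral_congr fun x ↦ by by_cases hx : x ∈ E <;> simp [f, hx]
  have hchebyshev := sq_mul_volume_le_enorm_progressionDiscrepancy_le
    (measurable_const.indicator hE) hf (support_indicator_subset.trans hEX) b (ENNReal.ofReal T)
  refine ⟨toMeasurable volume {p ∈ stepOffsetRegion b |
    ENNReal.ofReal T ≤ ‖progressionDiscrepancy f p.1 p.2‖ₑ}, measurableSet_toMeasurable _ _,
    ?_, fun θ η hθ hθb hη hηθ hB ↦ ?_⟩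
  · rw [measure_toMeasurable, ENNReal.ofReal_mul' (by positivity),
      ENNReal.ofReal_div_of_pos (by positivity), ofReal_measureReal hE_top,
      ENNReal.ofReal_pow hT.le, ← mul_div_assoc, ENNReal.le_div_iff_mul_le (by simp [hT]) (by simp),
      mul_comm, ← hf_sq]
    exact hchebyshev
  · by_contra! hle
    refine hB (subset_toMeasurable _ _ ⟨⟨⟨hθ, hθb⟩, hη, hηθ⟩, ?_⟩)
    rw [progressionDiscrepancy_indicator_one hE, ← ofReal_norm, Complex.norm_real]
    exact ENNReal.ofReal_le_ofReal hle

theorem discrepancy_outside_exceptional_set_general {S : Set ℝ} (hS : MeasurableSet S) (b : ℝ)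
    {H M N : ℝ} (hH : 0 < H) (hM : 1 ≤ M) (hN : 0 ≤ N) :
    ∃ B : Set (ℝ × ℝ), MeasurableSet B ∧
      volume B ≤ ENNReal.ofReal (b / (H * Real.log (1 + H) ^ 2)) ∧
      ∀ θ η : ℝ, 0 < θ → θ ≤ b → 0 ≤ η → η < θ → (θ, η) ∉ B →
        |(Nat.card {k : ℕ | k * θ + η ∈ S ∩ Icc 0 N} : ℝ) - 1 / θ * volume.real (S ∩ Icc 0 N)| <
          2 * N / M + √(H * N * M) * Real.log (1 + H) + 2 := by
  set L := Real.log (1 + H)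
  have hL : 0 < L := Real.log_pos (by linarith)
  set T := 2 * N / M + √(H * N * M) * L + 2
  have hT : 0 < T := by positivity
  obtain ⟨B, hB, hB_vol, hB_discr⟩ := exists_volume_le_forall_abs_card_sub_lt
    (hS.inter measurableSet_Icc) inter_subset_right b hT
  refine ⟨B, hB, hB_vol.trans ?_, hB_discr⟩
  have hvol : volume.real (S ∩ Icc 0 N) ≤ N :=
    (measureReal_mono inter_subset_right measure_Icc_lt_top.ne).trans_eq (by simp [hN])
  have hT_sq : N * (H * L ^ 2) ≤ T ^ 2 :=
    calc N * (H * L ^ 2) ≤ N * (H * L ^ 2) * M := le_mul_of_one_le_right (by positivity) hM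
      _ = (√(H * N * M) * L) ^ 2 := by rw [mul_pow, Real.sq_sqrt (by positivity)]; ring
      _ ≤ T ^ 2 := by
        gcongr
        have : 0 ≤ 2 * N / M := by positivity
        linarith
  have hratio : volume.real (S ∩ Icc 0 N) / T ^ 2 ≤ 1 / (H * L ^ 2) := by
    rw [div_le_div_iff₀ (by positivity) (by positivity), one_mul]
    exact (mul_le_mul_of_nonneg_right hvol (by positivity)).trans hT_sq
  rw [ENNReal.ofReal_mul' (by positivity), div_eq_mul_one_div b,
    ENNReal.ofReal_mul' (by positivity)]
  gcongr

end Discrepancy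

end

/-- Apart from an exceptional set of pairs `(θ, η)` of measure at most
`2^(ℓ+13)/(h log²(1+h))`, every pair `(θ, η)` with `2^ℓ ≤ θ ≤ 2^(ℓ+1)` and `0 ≤ η < θ`
satisfies `|#{k : kθ + η ∈ S ∩ [0,N]} - (1/θ)λ₁(S ∩ [0,N])| < 2N/M + √(hNM) log(1+h) + 2`. -/
theorem discrepancy_outside_exceptional_set
    (S : Set ℝ) (hS : MeasurableSet S) (ℓ : ℕ) (h : ℕ) (hh : 0 < h)
    (M N : ℕ) (hM : 2 ^ ℓ ≤ M) (hMN : M < N) (hN : 2 ^ (ℓ + 1) ≤ N) :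
    ∃ B : Set (ℝ × ℝ), MeasurableSet B ∧
      volume B ≤ ENNReal.ofReal ((2:ℝ) ^ (ℓ + 13) / ((h : ℝ) * Real.log (1 + h) ^ 2)) ∧
      ∀ θ η : ℝ, (2:ℝ)^ℓ ≤ θ → θ ≤ (2:ℝ)^(ℓ+1) → 0 ≤ η → η < θ → (θ, η) ∉ B →
        |(Nat.card {k : ℕ | (k : ℝ) * θ + η ∈ S ∩ Set.Icc (0:ℝ) (N:ℝ)} : ℝ) -
            (1 / θ) * (volume (S ∩ Set.Icc (0:ℝ) (N:ℝ))).toReal| <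
          2 * N / M + Real.sqrt ((h : ℝ) * N * M) * Real.log (1 + h) + 2 := by
  have hM_one : (1 : ℝ) ≤ M := mod_cast Nat.one_le_two_pow.trans hM
  obtain ⟨B, hB, hB_vol, hB_discr⟩ := discrepancy_outside_exceptional_set_general hS (2 ^ (ℓ + 1))
    (Nat.cast_pos.mpr hh) hM_one N.cast_nonneg
  refine ⟨B, hB, hB_vol.trans ?_, fun θ η hθ hθ' ↦ hB_discr θ η (hθ.trans_lt' (by positivity)) hθ'⟩
  gcongr <;> norm_num
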